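/- arXiv:math/0303278 — 3 statements merged into one kernel-verified Lean document; each statement's English description precedes it below -/
import Mathlib

section
/- Let n ≥ 1, let z : Fin n → ℂ with z i ≠ 0 for all i, and let Z be the diagonal matrix with diagonal entries z i. Let G be an n × n complex matrix such that the conjugated matrix Z G Z⁻¹ has all entries bounded: ‖G i j‖ · |z i| / |z j| ≤ C for all i, j (with C ≥ 0), and suppose |det G| ≥ c for some c > 0. Then G is invertible and Z G⁻¹ Z⁻¹ has bounded entries: ‖G⁻¹ i j‖ · |z i| / |z j| ≤ (n−1)! · C^(n−1) / c for all i, j. -/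
open scoped Matrix

/-! Conjugation by `Z` preserves the determinant and commutes with inversion, so one may replace
`G` by `Z * G * Z⁻¹`, whose entries are at most `C`. By Cramer's rule the entries of its inverse
are cofactors divided by the determinant, and each cofactor is a signed sum of `(n - 1)!` products
of `n - 1` entries. -/

section

open Matrix
open scoped Nat

variable {ι R K S : Type*} [Fintype ι] [DecidableEq ι]

theorem inv_conj_of_isUnit [CommRing R] {Z : Matrix ι ι R} (hZ : IsUnit Z) (G : Matrix ι ι R) :
    (Z * G * Z⁻¹)⁻¹ = Z * G⁻¹ * Z⁻¹ := by
  rw [Matrix.mul_inv_rev, Matrix.mul_inv_rev,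
    nonsing_inv_nonsing_inv Z ((isUnit_iff_isUnit_det Z).mp hZ), Matrix.mul_assoc]

theorem isUnit_diagonal_of_ne_zero [Field K] {z : ι → K} (hz : ∀ i, z i ≠ 0) :
    IsUnit (diagonal z) :=
  isUnit_diagonal.mpr (Pi.isUnit_iff.mpr fun i ↦ (hz i).isUnit)

theorem diagonal_conj_apply [Field K] {z : ι → K} (hz : ∀ i, z i ≠ 0) (G : Matrix ι ι K)
    (i j : ι) : (diagonal z * G * (diagonal z)⁻¹) i j = z i * G i j / z j := by
  have inv_diagonal_eq : (diagonal z)⁻¹ = diagonal z⁻¹ := by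
    refine inv_eq_right_inv ?_
    simp only [diagonal_mul_diagonal, Pi.inv_apply, mul_inv_cancel₀ (hz _), diagonal_one]
  rw [inv_diagonal_eq, mul_diagonal, diagonal_mul, Pi.inv_apply, div_eq_mul_inv]

theorem abv_adjugate_fin_succ_apply_le [CommRing R] [Nontrivial R]
    [CommRing S] [LinearOrder S] [IsStrictOrderedRing S] (abv : AbsoluteValue R S) {m : ℕ}
    {A : Matrix (Fin (m + 1)) (Fin (m + 1)) R} {C : S} (hA : ∀ i j, abv (A i j) ≤ C)
    (i j : Fin (m + 1)) : abv (A.adjugate i j) ≤ m ! * C ^ m :=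
  calc abv (A.adjugate i j) = abv (A.submatrix j.succAbove i.succAbove).det := by
        rw [adjugate_fin_succ_eq_det_submatrix, abv.map_mul, abv.map_pow, abv.map_neg,
          abv.map_one, one_pow, one_mul]
    _ ≤ m ! * C ^ m := by
        simpa only [Fintype.card_fin, nsmul_eq_mul] using
          det_le (A := A.submatrix j.succAbove i.succAbove) (abv := abv) fun _ _ ↦ hA _ _

theorem abv_adjugate_apply_le [CommRing R] [Nontrivial R]
    [CommRing S] [LinearOrder S] [IsStrictOrderedRing S] (abv : AbsoluteValue R S)
    {A : Matrix ι ι R} {C : S} (hA : ∀ i j, abv (A i j) ≤ C) (i j : ι) :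
    abv (A.adjugate i j) ≤ (Fintype.card ι - 1)! * C ^ (Fintype.card ι - 1) := by
  have card_eq : Fintype.card ι = Fintype.card ι - 1 + 1 :=
    (Nat.sub_add_cancel (Fintype.card_pos_iff.mpr ⟨i⟩)).symm
  let e := Fintype.equivFinOfCardEq card_eq
  have bound := abv_adjugate_fin_succ_apply_le abv (A := reindex e e A)
    (fun _ _ ↦ hA _ _) (e i) (e j)
  simpa only [reindex_apply, adjugate_submatrix_equiv_self, submatrix_apply,
    Equiv.symm_apply_apply] using bound

variable [Field K] [Field S] [LinearOrder S] [IsStrictOrderedRing S]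

theorem abv_inv_apply_le (abv : AbsoluteValue K S) {A : Matrix ι ι K} {C c : S} (hc : 0 < c)
    (hA : ∀ i j, abv (A i j) ≤ C) (hdet : c ≤ abv A.det) (i j : ι) :
    abv (A⁻¹ i j) ≤ (Fintype.card ι - 1)! * C ^ (Fintype.card ι - 1) / c := by
  have cofactor_le := abv_adjugate_apply_le abv hA i j
  calc abv (A⁻¹ i j) = abv (A.adjugate i j) / abv A.det := by
        rw [inv_def, Matrix.smul_apply, smul_eq_mul, Ring.inverse_eq_inv', inv_mul_eq_div, map_div₀]
    _ ≤ (Fintype.card ι - 1)! * C ^ (Fintype.card ι - 1) / c :=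
        div_le_div₀ ((abv.nonneg _).trans cofactor_le) cofactor_le hc hdet

theorem T_bounded_inverse_general (abv : AbsoluteValue K S) {Z G : Matrix ι ι K} {C c : S}
    (hZ : IsUnit Z) (hc : 0 < c) (hTbd : ∀ i j, abv ((Z * G * Z⁻¹) i j) ≤ C)
    (hdet : c ≤ abv G.det) :
    IsUnit G ∧ ∀ i j, abv ((Z * G⁻¹ * Z⁻¹) i j) ≤
      (Fintype.card ι - 1)! * C ^ (Fintype.card ι - 1) / c := by
  have det_ne_zero : G.det ≠ 0 := abv.pos_iff.mp (hc.trans_le hdet)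
  refine ⟨(isUnit_iff_isUnit_det G).mpr det_ne_zero.isUnit, ?_⟩
  rw [← inv_conj_of_isUnit hZ]
  exact abv_inv_apply_le abv hc hTbd (by rwa [det_conj hZ])

end

/-- Lemma 3.1: if `G` is T-bounded (i.e. `Z G Z⁻¹` is bounded, where
`Z = Diag(z₁,…,zₙ)`, equivalently `‖G i j‖·|z i|/|z j| ≤ C`) and `|det G| ≥ c > 0`,
then `G⁻¹` is T-bounded with the explicit bound `(n−1)! · C^(n−1) / c`. -/
theorem T_bounded_inverse
    (n : ℕ) (hn : 1 ≤ n) (z : Fin n → ℂ) (hz : ∀ i, z i ≠ 0)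
    (G : Matrix (Fin n) (Fin n) ℂ) (C c : ℝ) (hC : 0 ≤ C) (hc : 0 < c)
    (hTbd : ∀ i j, ‖G i j‖ * ‖z i‖ / ‖z j‖ ≤ C) (hdet : c ≤ ‖G.det‖) :
    IsUnit G ∧
      ∀ i j, ‖G⁻¹ i j‖ * ‖z i‖ / ‖z j‖ ≤ (Nat.factorial (n - 1) : ℝ) * C ^ (n - 1) / c := by
  have entry_norm (M : Matrix (Fin n) (Fin n) ℂ) (i j : Fin n) :
      ‖M i j‖ * ‖z i‖ / ‖z j‖ = ‖(Matrix.diagonal z * M * (Matrix.diagonal z)⁻¹) i j‖ := by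
    rw [diagonal_conj_apply hz, norm_div, norm_mul, mul_comm ‖z i‖]
  simp only [entry_norm] at hTbd ⊢
  simpa only [Fintype.card_fin] using! T_bounded_inverse_general (NormedField.toAbsoluteValue ℂ)
    (isUnit_diagonal_of_ne_zero hz) hc hTbd hdet
end

section
/- Let n ≥ 1, let f : ℝⁿ → ℝ be twice continuously differentiable, let j, k be coordinate indices, p_j, p_k > 0, 0 < α ≤ 1 and H ≥ 0. Assume f is periodic with period p_j in the j-th coordinate and with period p_k in the k-th coordinate, and that the mixed second partial derivative ∂²f/∂x_j∂x_k is α-Hölder with constant H: |∂²_{jk}f(x) − ∂²_{jk}f(y)| ≤ H·‖x − y‖^α for all x, y. Then |∂²f/∂x_j∂x_k (x)| ≤ H · min(p_j, p_k)^α for every x ∈ ℝⁿ. -/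
/-!
Since `f` is periodic along `v`, so is `∂ᵤf`, hence `∂ᵥ∂ᵤf` has mean zero over each period in
the direction `v` and cannot exceed its oscillation there. The Hölder condition bounds that
oscillation by `H * (p * ‖v‖) ^ α`. Symmetry of second derivatives exchanges the roles of `u` and
`v`. For vector-valued `f` the mean-zero argument is replaced by the mean value inequality
applied to `t ↦ φ t - t • c`, where `φ` is the restriction of `∂ᵤf` to a line.
-/

open Set

section Calculus

variable {𝕜 : Type*} [NontriviallyNormedField 𝕜]
  {E : Type*} [NormedAddCommGroup E] [NormedSpace 𝕜 E]
  {F : Type*} [NormedAddCommGroup F] [NormedSpace 𝕜 F]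

theorem periodic_fderiv {f : E → F} {c : E} (hf : Function.Periodic f c) :
    Function.Periodic (fderiv 𝕜 f) c := fun x => by
  rw [← fderiv_comp_add_right, hf.funext]

theorem hasDerivAt_comp_add_smul {g : E → F} {x v : E} {t : 𝕜}
    (hg : DifferentiableAt 𝕜 g (x + t • v)) :
    HasDerivAt (fun s : 𝕜 => g (x + s • v)) (fderiv 𝕜 g (x + t • v) v) t := by
  have hline : HasDerivAt (fun s : 𝕜 => x + s • v) v t := by
    simpa only [one_smul] using ((hasDerivAt_id' t).smul_const v).const_add x
  exact hg.hasFDerivAt.comp_hasDerivAt t hline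

theorem fderiv_fderiv_apply {f : E → F} {x : E} (hf : DifferentiableAt 𝕜 (fderiv 𝕜 f) x)
    (u v : E) : fderiv 𝕜 (fun w => fderiv 𝕜 f w u) x v = fderiv 𝕜 (fderiv 𝕜 f) x v u := by
  rw [fderiv_clm_apply hf (differentiableAt_const u)]
  simp

theorem fderiv_fderiv_apply_comm {n : WithTop ℕ∞} {f : E → F} {x : E}
    (hf : ContDiffAt 𝕜 n f x) (hn : minSmoothness 𝕜 2 ≤ n) (u v : E) :
    fderiv 𝕜 (fun w => fderiv 𝕜 f w u) x v = fderiv 𝕜 (fun w => fderiv 𝕜 f w v) x u := by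
  have hdiff : DifferentiableAt 𝕜 (fderiv 𝕜 f) x :=
    ((hf.of_le (le_minSmoothness.trans hn)).fderiv_right (m := 1) (by norm_num)).differentiableAt
      one_ne_zero
  rw [fderiv_fderiv_apply hdiff, fderiv_fderiv_apply hdiff]
  exact hf.isSymmSndFDerivAt hn v u

end Calculus

section Periodic

variable {E : Type*} [NormedAddCommGroup E] [NormedSpace ℝ E]
  {F : Type*} [NormedAddCommGroup F] [NormedSpace ℝ F]

theorem norm_le_of_norm_deriv_sub_le_of_eq_endpoints {φ φ' : ℝ → F} {a b C : ℝ} {c : F}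
    (hab : a < b) (hφ : ∀ t ∈ Icc a b, HasDerivWithinAt φ (φ' t) (Icc a b) t)
    (hends : φ a = φ b) (hbound : ∀ t ∈ Ico a b, ‖φ' t - c‖ ≤ C) : ‖c‖ ≤ C := by
  have hderiv : ∀ t ∈ Icc a b,
      HasDerivWithinAt (fun s => φ s - s • c) (φ' t - c) (Icc a b) t := fun t ht => by
    simpa only [one_smul] using
      (hφ t ht).fun_sub ((hasDerivAt_id' t).smul_const c).hasDerivWithinAt
  have hincr : φ b - b • c - (φ a - a • c) = -((b - a) • c) := by
    rw [hends, sub_smul]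
    abel
  have hmean : (b - a) * ‖c‖ ≤ (b - a) * C :=
    calc (b - a) * ‖c‖ = ‖φ b - b • c - (φ a - a • c)‖ := by
          rw [hincr, norm_neg, norm_smul, Real.norm_of_nonneg (sub_pos.2 hab).le]
      _ ≤ C * (b - a) :=
          norm_image_sub_le_of_norm_deriv_le_segment' hderiv hbound b (right_mem_Icc.2 hab.le)
      _ = (b - a) * C := mul_comm _ _
  exact le_of_mul_le_mul_left hmean (sub_pos.2 hab)

theorem norm_fderiv_apply_le_of_periodic_of_holder_at {g : E → F} {x v : E} {p α H : ℝ}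
    (hg : Differentiable ℝ g) (hper : Function.Periodic g (p • v)) (hp : 0 < p) (hα : 0 ≤ α)
    (hH : 0 ≤ H) (hHolder : ∀ y, ‖fderiv ℝ g y v - fderiv ℝ g x v‖ ≤ H * ‖y - x‖ ^ α) :
    ‖fderiv ℝ g x v‖ ≤ H * (p * ‖v‖) ^ α := by
  refine norm_le_of_norm_deriv_sub_le_of_eq_endpoints hp
    (fun t _ => (hasDerivAt_comp_add_smul (hg (x + t • v))).hasDerivWithinAt)
    (by rw [zero_smul, add_zero, hper x]) fun t ht => ?_
  have hdist : ‖x + t • v - x‖ ≤ p * ‖v‖ := by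
    rw [add_sub_cancel_left, norm_smul, Real.norm_of_nonneg ht.1]
    gcongr
    exact ht.2.le
  exact (hHolder _).trans (by gcongr)

theorem periodic_mixed_second_derivative_bound_general {f : E → F} (hf : ContDiff ℝ 2 f)
    {x u v : E} {p q α H : ℝ} (hp : 0 < p) (hq : 0 < q) (hα : 0 ≤ α) (hH : 0 ≤ H)
    (hperu : Function.Periodic f (p • u)) (hperv : Function.Periodic f (q • v))
    (hHolder : ∀ y, ‖fderiv ℝ (fun w => fderiv ℝ f w u) y v -
      fderiv ℝ (fun w => fderiv ℝ f w u) x v‖ ≤ H * ‖y - x‖ ^ α) :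
    ‖fderiv ℝ (fun w => fderiv ℝ f w u) x v‖ ≤ H * min (p * ‖u‖) (q * ‖v‖) ^ α := by
  have hdiff (a : E) : Differentiable ℝ (fun w => fderiv ℝ f w a) :=
    ((hf.fderiv_right (m := 1) (by norm_num)).clm_apply contDiff_const).differentiable one_ne_zero
  have hper {a c : E} (hc : Function.Periodic f c) :
      Function.Periodic (fun w => fderiv ℝ f w a) c :=
    (periodic_fderiv hc).comp fun L : E →L[ℝ] F => L a
  have hcomm (y : E) := fderiv_fderiv_apply_comm hf.contDiffAt (x := y) (by simp) u v
  rcases min_choice (p * ‖u‖) (q * ‖v‖) with hmin | hmin <;> rw [hmin]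
  · simp only [hcomm] at hHolder ⊢
    exact norm_fderiv_apply_le_of_periodic_of_holder_at (hdiff v) (hper hperu) hp hα hH hHolder
  · exact norm_fderiv_apply_le_of_periodic_of_holder_at (hdiff u) (hper hperv) hq hα hH hHolder

end Periodic

/-- Rescaled Lemma 3.5, mixed second-derivative estimate: if `f : ℝⁿ → ℝ` is `C²`,
periodic with periods `p_j`, `p_k` in the `j`-th and `k`-th coordinates, and the mixed
second derivative `∂²_{jk} f` is `α`-Hölder with constant `H`, then
`|∂²f/∂x_j∂x_k| ≤ H · min(p_j, p_k)^α` everywhere. -/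
theorem periodic_mixed_second_derivative_bound
    (n : ℕ) (hn : 1 ≤ n) (f : EuclideanSpace ℝ (Fin n) → ℝ)
    (hf : ContDiff ℝ 2 f) (j k : Fin n) (pj pk α H : ℝ)
    (hpj : 0 < pj) (hpk : 0 < pk) (hα0 : 0 < α) (hα1 : α ≤ 1) (hH : 0 ≤ H)
    (hperj : ∀ x, f (x + pj • EuclideanSpace.single j 1) = f x)
    (hperk : ∀ x, f (x + pk • EuclideanSpace.single k 1) = f x)
    (hHolder : ∀ x y,
      |fderiv ℝ (fun w => fderiv ℝ f w (EuclideanSpace.single j 1)) x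
          (EuclideanSpace.single k 1) -
        fderiv ℝ (fun w => fderiv ℝ f w (EuclideanSpace.single j 1)) y
          (EuclideanSpace.single k 1)| ≤ H * ‖x - y‖ ^ α) :
    ∀ x, |fderiv ℝ (fun w => fderiv ℝ f w (EuclideanSpace.single j 1)) x
        (EuclideanSpace.single k 1)| ≤ H * (min pj pk) ^ α := by
  intro x
  simpa using periodic_mixed_second_derivative_bound_general hf hpj hpk hα0.le hH hperj hperk
    (hHolder · x)
end

section
/- Let n ≥ 1, let f : ℝⁿ → ℝ be twice continuously differentiable, let 0 < α ≤ 1, H ≥ 0, and let p : Fin n → ℝ with p_i > 0 for all i. Assume f is periodic with period p_i in the i-th coordinate for every i, and that every second partial derivative is α-Hölder with constant H: |∂²_{ij}f(x) − ∂²_{ij}f(y)| ≤ H·‖x − y‖^α for all indices i, j and all x, y. Then for every coordinate index k and all x, y ∈ ℝⁿ, |∂f/∂x_k(x) − ∂f/∂x_k(y)| ≤ 2n · H · p_k · ‖x − y‖^α. -/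
/-!
Write `e` for the direction of the period `p`. For fixed `x` and `y`, the function
`F t = f (x + t • e) - f (y + t • e)` is `p`-periodic, and `‖F''‖ ≤ H * ‖x - y‖ ^ α`, because the
base points `x + t • e` and `y + t • e` differ by `x - y` for every `t`. Since `F 0 = F p`, the mean
of `F'` over a period vanishes, and `F'` varies by at most `p * sup ‖F''‖` over a period, so
`‖F' 0‖ ≤ p * H * ‖x - y‖ ^ α`. As `F' 0 = ∂ₑf(x) - ∂ₑf(y)`, this is the estimate; taking the
difference before using periodicity avoids comparing `‖x - y‖` with `p`.
-/

open Set

theorem norm_deriv_left_le_of_eq_endpoints {G : Type*} [NormedAddCommGroup G] [NormedSpace ℝ G]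
    {F F' F'' : ℝ → G} {a b C : ℝ} (hab : a < b)
    (hF : ∀ t ∈ Icc a b, HasDerivWithinAt F (F' t) (Icc a b) t)
    (hF' : ∀ t ∈ Icc a b, HasDerivWithinAt F' (F'' t) (Icc a b) t)
    (hC : ∀ t ∈ Icc a b, ‖F'' t‖ ≤ C) (hends : F a = F b) :
    ‖F' a‖ ≤ C * (b - a) := by
  have ha : a ∈ Icc a b := left_mem_Icc.2 hab.le
  have hb : b ∈ Icc a b := right_mem_Icc.2 hab.le
  have hC0 : 0 ≤ C := (norm_nonneg _).trans (hC a ha)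
  have deriv_variation (t : ℝ) (ht : t ∈ Icc a b) : ‖F' t - F' a‖ ≤ C * (b - a) :=
    (norm_image_sub_le_of_norm_deriv_le_segment' hF'
      (fun s hs => hC s (Ico_subset_Icc_self hs)) t ht).trans (by gcongr; exact ht.2)
  -- `t ↦ F t - (t - a) • F' a` has derivative `F' t - F' a` and increment `-(b - a) • F' a`.
  have tangent_error : ‖F b - (b - a) • F' a - (F a - (a - a) • F' a)‖ ≤ C * (b - a) * (b - a) :=
    norm_image_sub_le_of_norm_deriv_le_segment' (f := fun t => F t - (t - a) • F' a)
      (fun t ht => by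
        simpa using (hF t ht).fun_sub (((hasDerivWithinAt_id t _).sub_const a).smul_const (F' a)))
      (fun t ht => deriv_variation t (Ico_subset_Icc_self ht)) b hb
  have hlen : 0 < b - a := sub_pos.2 hab
  have increment : (b - a) * ‖F' a‖ ≤ (b - a) * (C * (b - a)) := by
    simpa [← hends, norm_smul, abs_of_pos hlen, mul_comm (b - a)] using tangent_error
  exact le_of_mul_le_mul_left increment hlen

theorem hasDerivAt_comp_add_smul_s10 {𝕜 E G : Type*} [NontriviallyNormedField 𝕜] [AddCommGroup E]
    [Module 𝕜 E] [NormedAddCommGroup G] [NormedSpace 𝕜 G] {f : E → G} {f' : G} {x e : E} {t : 𝕜}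
    (hf : HasLineDerivAt 𝕜 f f' (x + t • e) e) :
    HasDerivAt (fun s : 𝕜 => f (x + s • e)) f' t := by
  have hf₀ : HasDerivAt (fun s : 𝕜 => f (x + t • e + s • e)) f' (t - t) := by
    simpa only [sub_self, HasLineDerivAt] using hf
  simpa [add_assoc, ← add_smul] using hf₀.comp_sub_const t t

theorem norm_lineDeriv_sub_le_of_periodic {E G : Type*} [AddCommGroup E] [Module ℝ E]
    [NormedAddCommGroup G] [NormedSpace ℝ G] {f f' f'' : E → G} {e x y : E} {p C : ℝ}
    (hf : ∀ z, HasLineDerivAt ℝ f (f' z) z e) (hf' : ∀ z, HasLineDerivAt ℝ f' (f'' z) z e)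
    (hp : 0 < p) (hper : Function.Periodic f (p • e))
    (hC : ∀ t : ℝ, ‖f'' (x + t • e) - f'' (y + t • e)‖ ≤ C) :
    ‖f' x - f' y‖ ≤ C * p := by
  simpa using norm_deriv_left_le_of_eq_endpoints (F := fun t => f (x + t • e) - f (y + t • e)) hp
    (fun t _ => ((hasDerivAt_comp_add_smul_s10 (hf _)).sub
      (hasDerivAt_comp_add_smul_s10 (hf _))).hasDerivWithinAt)
    (fun t _ => ((hasDerivAt_comp_add_smul_s10 (hf' _)).sub
      (hasDerivAt_comp_add_smul_s10 (hf' _))).hasDerivWithinAt)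
    (fun t _ => hC t) (by simp [hper x, hper y])

theorem periodic_first_derivative_holder_bound_general {E G : Type*} [SeminormedAddCommGroup E]
    [Module ℝ E] [NormedAddCommGroup G] [NormedSpace ℝ G] {f f' f'' : E → G} {e : E}
    {p H α : ℝ} (hf : ∀ z, HasLineDerivAt ℝ f (f' z) z e)
    (hf' : ∀ z, HasLineDerivAt ℝ f' (f'' z) z e) (hp : 0 < p)
    (hper : Function.Periodic f (p • e))
    (hHolder : ∀ x y, ‖f'' x - f'' y‖ ≤ H * ‖x - y‖ ^ α) (x y : E) :
    ‖f' x - f' y‖ ≤ H * p * ‖x - y‖ ^ α := by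
  rw [mul_right_comm]
  refine norm_lineDeriv_sub_le_of_periodic hf hf' hp hper fun t => ?_
  simpa only [add_sub_add_right_eq_sub] using hHolder (x + t • e) (y + t • e)

/-- Rescaled Lemma 3.5, Hölder seminorm estimate: if `f : ℝⁿ → ℝ` is `C²`, periodic
with period `p_i` in every coordinate `i`, and all second partial derivatives are
`α`-Hölder with constant `H`, then each first partial `∂f/∂x_k` is `α`-Hölder with
constant `2n · H · p_k`. -/
theorem periodic_first_derivative_holder_bound
    (n : ℕ) (hn : 1 ≤ n) (f : EuclideanSpace ℝ (Fin n) → ℝ)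
    (hf : ContDiff ℝ 2 f) (α H : ℝ) (p : Fin n → ℝ)
    (hα0 : 0 < α) (hα1 : α ≤ 1) (hH : 0 ≤ H) (hp : ∀ i, 0 < p i)
    (hper : ∀ i x, f (x + p i • EuclideanSpace.single i 1) = f x)
    (hHolder : ∀ (i j : Fin n) (x y : EuclideanSpace ℝ (Fin n)),
      |fderiv ℝ (fun w => fderiv ℝ f w (EuclideanSpace.single i 1)) x
          (EuclideanSpace.single j 1) -
        fderiv ℝ (fun w => fderiv ℝ f w (EuclideanSpace.single i 1)) y
          (EuclideanSpace.single j 1)| ≤ H * ‖x - y‖ ^ α) :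
    ∀ (k : Fin n) (x y : EuclideanSpace ℝ (Fin n)),
      |fderiv ℝ f x (EuclideanSpace.single k 1) -
        fderiv ℝ f y (EuclideanSpace.single k 1)| ≤
          2 * n * H * p k * ‖x - y‖ ^ α := by
  intro k x y
  have hf' : Differentiable ℝ fun w => fderiv ℝ f w (EuclideanSpace.single k 1) :=
    ((hf.fderiv_right (m := 1) le_rfl).differentiable one_ne_zero).clm_apply
      (differentiable_const _)
  have one_le_const : (1 : ℝ) ≤ 2 * n := by exact_mod_cast (by lia : 1 ≤ 2 * n)
  have hpk : 0 ≤ p k := (hp k).le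
  calc
    _ ≤ H * p k * ‖x - y‖ ^ α := periodic_first_derivative_holder_bound_general
      (fun z => (hf.differentiable two_ne_zero z).hasFDerivAt.hasLineDerivAt _)
      (fun z => (hf' z).hasFDerivAt.hasLineDerivAt _) (hp k) (hper k) (hHolder k k) x y
    _ ≤ 2 * n * H * p k * ‖x - y‖ ^ α := by gcongr; exact le_mul_of_one_le_left hH one_le_const
end
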